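/- The upper Pólya density equals the Beurling–Malliavin density restricted to substantial sequences with limsup of endpoint ratios strictly greater than 1: p̄(Λ) = b_{(1,+∞]}(Λ). -/

import Mathlib

open Filter Topology

/-- The counting function of the sequence `Λ`: `F_Λ(t) = #{k : Λ k ≤ t}` for `t > 0`
and `0` otherwise. -/
noncomputable def countFn (Λ : ℕ → ℝ) (t : ℝ) : ℝ :=
  if 0 < t then (Nat.card {k : ℕ | Λ k ≤ t} : ℝ) else 0

/-- A sequence of intervals `((a n, b n])_n` with `0 < a n < b n ≤ a (n+1)` is
*substantial* if `Σ (b n / a n - 1)² = ∞`. -/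
def IsSubstantial (a b : ℕ → ℝ) : Prop :=
  (∀ n, 0 < a n ∧ a n < b n ∧ b n ≤ a (n + 1)) ∧
    ¬ Summable (fun n => (b n / a n - 1) ^ 2)

/-- `limsup_n b n / a n`, taken in the extended reals. -/
noncomputable def ratioLimsup (a b : ℕ → ℝ) : EReal :=
  Filter.limsup (fun n => ((b n / a n : ℝ) : EReal)) Filter.atTop

/-- `ℓ_I = liminf_n (F_Λ(b n) - F_Λ(a n)) / (b n - a n)`, in the extended reals. -/
noncomputable def ellOf (Λ : ℕ → ℝ) (a b : ℕ → ℝ) : EReal :=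
  Filter.liminf
    (fun n => (((countFn Λ (b n) - countFn Λ (a n)) / (b n - a n) : ℝ) : EReal))
    Filter.atTop

/-- The set `𝔯_A` of admissible rates `R ≥ 0`. -/
def RSet (Λ : ℕ → ℝ) (A : Set EReal) : Set ℝ :=
  {R | 0 ≤ R ∧ ∃ a b : ℕ → ℝ, IsSubstantial a b ∧ ratioLimsup a b ∈ A ∧
    ∀ᶠ n in Filter.atTop, R ≤ (countFn Λ (b n) - countFn Λ (a n)) / (b n - a n)}

/-- The (restricted) Beurling–Malliavin density `b_A(Λ) = sup 𝔯_A`. -/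
noncomputable def bmDensity (Λ : ℕ → ℝ) (A : Set EReal) : EReal :=
  sSup ((fun r : ℝ => (r : EReal)) '' RSet Λ A)

/-- `limsup_{x → ∞} (F_Λ(x) - F_Λ(ξ x)) / (x - ξ x)`, in the extended reals. -/
noncomputable def polyaLimsup (Λ : ℕ → ℝ) (ξ : ℝ) : EReal :=
  Filter.limsup
    (fun x : ℝ => (((countFn Λ x - countFn Λ (ξ * x)) / (x - ξ * x) : ℝ) : EReal))
    Filter.atTop

/-!
The density `b` in question is both an upper bound and an asymptotic lower bound for
`ξ ↦ polyaLimsup Λ ξ` as `ξ → 1⁻`, so the limit defining the Pólya density exists and equals `b`.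

* If `F x - F (ξ x) ≥ R (x - ξ x)` for arbitrarily large `x`, then a sequence of such `x`, each at
  least `ξ⁻¹` times the preceding one, gives intervals `(ξ x, x]` of constant ratio `ξ⁻¹ > 1`; they
  are substantial and witness the rate `R`. Hence `polyaLimsup Λ ξ ≤ b` for every `ξ ∈ (0, 1)`.
* Let intervals `(s, t]` with `t ≥ c s`, `c > 1`, have mean slopes at least `R`. If the slopes of
  `F` on all far out intervals `(ξ x, x]` were at most `R' < R`, then cutting `(s, t]` geometrically
  from the right would give `F t - F s ≤ R' (t - ξ s)`. The overshoot `R' (1 - ξ) s` is at most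
  proportional to `1 - ξ`, while the excess `(R - R') (t - s)` is at least `(R - R') (c - 1) s`: a
  contradiction once `ξ` is close enough to `1`.
-/

theorem countFn_monotone {Λ : ℕ → ℝ} (hΛ : Tendsto Λ atTop atTop) : Monotone (countFn Λ) := by
  intro s t hst
  have hfin : {k : ℕ | Λ k ≤ t}.Finite := by
    simpa only [← Nat.cofinite_eq_atTop, eventually_cofinite, not_lt] using
      hΛ.eventually_gt_atTop t
  unfold countFn
  by_cases hs : 0 < s
  · rw [if_pos hs, if_pos (hs.trans_le hst)]
    exact_mod_cast Nat.card_mono hfin fun k (hk : Λ k ≤ s) => hk.trans hst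
  · rw [if_neg hs]
    positivity

theorem exists_seq_of_frequently_of_eventually {α : Type*} {l : Filter α} {p : α → Prop}
    {r : α → α → Prop} (hp : ∃ᶠ x in l, p x) (hr : ∀ x, p x → ∀ᶠ y in l, r x y) :
    ∃ f : ℕ → α, (∀ n, p (f n)) ∧ ∀ m n, m < n → r (f m) (f n) :=
  exists_seq_of_forall_finset_exists p r fun s hs =>
    (hp.and_eventually <| (eventually_all_finset s).2 fun x hx => hr x (hs x hx)).exists

theorem tendsto_atTop_of_frequently_mul_le_succ {a : ℕ → ℝ} {c : ℝ} (ha : Monotone a)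
    (ha0 : 0 < a 0) (hc : 1 < c) (h : ∃ᶠ n in atTop, c * a n ≤ a (n + 1)) :
    Tendsto a atTop atTop := by
  refine (tendsto_atTop_of_monotone ha).resolve_right ?_
  rintro ⟨l, hl⟩
  have hl0 : 0 < l := ha0.trans_le (ha.ge_of_tendsto hl 0)
  have hcl : c * l ≤ l := le_of_tendsto_of_tendsto_of_frequently (hl.const_mul c)
    ((tendsto_add_atTop_iff_nat 1).2 hl) h
  exact hcl.not_gt (lt_mul_of_one_lt_left hl0 hc)

section ConstantRatio

variable {x : ℕ → ℝ} {ξ : ℝ}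

theorem isSubstantial_const_mul (hξ0 : 0 < ξ) (hξ1 : ξ < 1) (hx : ∀ n, 0 < x n)
    (hstep : ∀ n, x n ≤ ξ * x (n + 1)) : IsSubstantial (fun n => ξ * x n) x := by
  refine ⟨fun n => ⟨mul_pos hξ0 (hx n), mul_lt_of_lt_one_left (hx n) hξ1, hstep n⟩, ?_⟩
  simp only [div_mul_cancel_right₀ (hx _).ne', summable_const_iff]
  exact pow_ne_zero 2 (sub_pos.2 ((one_lt_inv₀ hξ0).2 hξ1)).ne'

theorem ratioLimsup_const_mul (hx : ∀ n, x n ≠ 0) :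
    ratioLimsup (fun n => ξ * x n) x = (ξ⁻¹ : ℝ) := by
  simp only [ratioLimsup, div_mul_cancel_right₀ (hx _), limsup_const]

end ConstantRatio

section Telescoping

variable {F : ℝ → ℝ} {ξ R : ℝ}

theorem sub_le_mul_sub_mul_of_forall_ge (hF : Monotone F) (hξ0 : 0 ≤ ξ) (hξ1 : ξ < 1) {s t : ℝ}
    (hs : 0 < s) (h : ∀ x, s ≤ x → F x - F (ξ * x) ≤ R * (x - ξ * x)) (hst : s ≤ t) :
    F t - F s ≤ R * (t - ξ * s) := by
  have hgap : ∀ x, s ≤ x → 0 < x - ξ * x := fun x hx =>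
    sub_pos.2 (mul_lt_of_lt_one_left (hs.trans_le hx) hξ1)
  have hR : 0 ≤ R := by
    have hmono : F (ξ * s) ≤ F s := hF (sub_pos.1 (hgap s le_rfl)).le
    exact nonneg_of_mul_nonneg_left ((sub_nonneg.2 hmono).trans (h s le_rfl)) (hgap s le_rfl)
  obtain ⟨k, hk⟩ := exists_pow_lt_of_lt_one (div_pos hs (hs.trans_le hst)) hξ1
  replace hk : ξ ^ k * t ≤ s := ((lt_div_iff₀ (hs.trans_le hst)).1 hk).le
  induction k generalizing t with
  | zero =>
    obtain rfl : t = s := le_antisymm (by simpa using hk) hst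
    simpa using mul_nonneg hR (hgap t le_rfl).le
  | succ k ih =>
    rcases le_total s (ξ * t) with hcut | hcut
    · have hleft : F (ξ * t) - F s ≤ R * (ξ * t - ξ * s) :=
        ih hcut (by rwa [← mul_assoc, ← pow_succ])
      linarith [h t hst]
    · calc F t - F s ≤ F t - F (ξ * t) := sub_le_sub_left (hF hcut) _
        _ ≤ R * (t - ξ * t) := h t hst
        _ ≤ R * (t - ξ * s) := by gcongr

theorem mul_sub_one_le_of_frequently_of_eventually {R' c : ℝ} (hF : Monotone F) (hξ0 : 0 ≤ ξ)
    (hξ1 : ξ < 1) (hc : 1 ≤ c) (hRR' : R' ≤ R)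
    (hlong : ∃ᶠ s in atTop, ∃ t, c * s ≤ t ∧ R * (t - s) ≤ F t - F s)
    (hshort : ∀ᶠ x in atTop, F x - F (ξ * x) ≤ R' * (x - ξ * x)) :
    (R - R') * (c - 1) ≤ R' * (1 - ξ) := by
  obtain ⟨s, ⟨⟨t, hct, hR⟩, hR'⟩, hs⟩ := ((hlong.and_eventually
    (eventually_forall_ge_atTop.2 hshort)).and_eventually (eventually_gt_atTop 0)).exists
  have hst : s ≤ t := (le_mul_of_one_le_left hs.le hc).trans hct
  have hupper : F t - F s ≤ R' * (t - ξ * s) :=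
    sub_le_mul_sub_mul_of_forall_ge hF hξ0 hξ1 hs hR' hst
  refine le_of_mul_le_mul_right ?_ hs
  calc (R - R') * (c - 1) * s = (R - R') * (c * s - s) := by ring
    _ ≤ (R - R') * (t - s) := by
      have := sub_nonneg.2 hRR'
      gcongr
    _ ≤ R' * (1 - ξ) * s := by linarith

end Telescoping

section Density

variable {Λ : ℕ → ℝ} {ξ R : ℝ}

theorem mem_RSet_Ioi_one_of_frequently (hξ0 : 0 < ξ) (hξ1 : ξ < 1) (hR : 0 ≤ R)
    (h : ∃ᶠ x in atTop, R ≤ (countFn Λ x - countFn Λ (ξ * x)) / (x - ξ * x)) :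
    R ∈ RSet Λ (Set.Ioi 1) := by
  obtain ⟨x, hx, hsep⟩ := exists_seq_of_frequently_of_eventually (r := fun y z => y ≤ ξ * z)
    (h.and_eventually (eventually_gt_atTop 0))
    fun y _ => (tendsto_id.const_mul_atTop hξ0).eventually_ge_atTop y
  have hpos : ∀ n, 0 < x n := fun n => (hx n).2
  refine ⟨hR, fun n => ξ * x n, x,
    isSubstantial_const_mul hξ0 hξ1 hpos fun n => hsep n (n + 1) n.lt_succ_self, ?_,
    Eventually.of_forall fun n => (hx n).1⟩
  rw [ratioLimsup_const_mul fun n => (hpos n).ne', Set.mem_Ioi]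
  exact_mod_cast (one_lt_inv₀ hξ0).2 hξ1

theorem exists_frequently_mul_sub_le_of_mem_RSet (hR : R ∈ RSet Λ (Set.Ioi 1)) :
    ∃ c, 1 < c ∧
      ∃ᶠ s in atTop, ∃ t, c * s ≤ t ∧ R * (t - s) ≤ countFn Λ t - countFn Λ s := by
  obtain ⟨-, a, b, ⟨hab, -⟩, hlim, hslope⟩ := hR
  obtain ⟨c, hc, hc_lt⟩ := EReal.lt_iff_exists_real_btwn.1 hlim
  replace hc : 1 < c := by exact_mod_cast hc
  have hratio : ∃ᶠ n in atTop, c * a n ≤ b n :=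
    (frequently_lt_of_lt_limsup (by isBoundedDefault) hc_lt).mono fun n hn =>
      ((lt_div_iff₀ (hab n).1).1 (EReal.coe_lt_coe_iff.1 hn)).le
  have ha_mono : Monotone a :=
    monotone_nat_of_le_succ fun n => (hab n).2.1.le.trans (hab n).2.2
  have ha : Tendsto a atTop atTop :=
    tendsto_atTop_of_frequently_mul_le_succ ha_mono (hab 0).1 hc
      (hratio.mono fun n hn => hn.trans (hab n).2.2)
  refine ⟨c, hc, ha.frequently <| (hratio.and_eventually hslope).mono ?_⟩
  rintro n ⟨hn, hRn⟩
  exact ⟨b n, hn, (le_div_iff₀ (sub_pos.2 (hab n).2.1)).1 hRn⟩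

theorem polyaLimsup_le_bmDensity (hF : Monotone (countFn Λ)) (hξ0 : 0 < ξ) (hξ1 : ξ < 1) :
    polyaLimsup Λ ξ ≤ bmDensity Λ (Set.Ioi 1) := by
  refine EReal.ge_of_forall_gt_iff_ge.1 fun R hR => ?_
  have hnonneg : ∀ᶠ x in atTop,
      0 ≤ (countFn Λ x - countFn Λ (ξ * x)) / (x - ξ * x) := by
    filter_upwards [eventually_ge_atTop 0] with x hx
    have hle : ξ * x ≤ x := mul_le_of_le_one_left hx hξ1.le
    exact div_nonneg (sub_nonneg.2 (hF hle)) (sub_nonneg.2 hle)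
  have hmem : max R 0 ∈ RSet Λ (Set.Ioi 1) :=
    mem_RSet_Ioi_one_of_frequently hξ0 hξ1 (le_max_right R 0) <|
      ((frequently_lt_of_lt_limsup (by isBoundedDefault) hR).and_eventually hnonneg).mono
        fun _ hx => max_le (EReal.coe_lt_coe_iff.1 hx.1).le hx.2
  calc (R : EReal) ≤ (max R 0 : ℝ) := EReal.coe_le_coe_iff.2 (le_max_left R 0)
    _ ≤ bmDensity Λ (Set.Ioi 1) := le_sSup ⟨_, hmem, rfl⟩

theorem eventually_sub_le_of_polyaLimsup_lt (hξ1 : ξ < 1) (h : polyaLimsup Λ ξ < R) :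
    ∀ᶠ x in atTop, countFn Λ x - countFn Λ (ξ * x) ≤ R * (x - ξ * x) := by
  filter_upwards [eventually_lt_of_limsup_lt h (by isBoundedDefault), eventually_gt_atTop 0]
    with x hx hx0
  exact ((div_lt_iff₀ (sub_pos.2 (mul_lt_of_lt_one_left hx0 hξ1))).1
    (EReal.coe_lt_coe_iff.1 hx)).le

theorem eventually_le_polyaLimsup_of_mem_RSet (hF : Monotone (countFn Λ))
    (hR : R ∈ RSet Λ (Set.Ioi 1)) {R' : ℝ} (hRR' : R' < R) :
    ∀ᶠ ξ in 𝓝[Set.Ioo (0 : ℝ) 1] 1, (R' : EReal) ≤ polyaLimsup Λ ξ := by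
  obtain ⟨c, hc, hlong⟩ := exists_frequently_mul_sub_le_of_mem_RSet hR
  have hlim : Tendsto (fun ξ : ℝ => R' * (1 - ξ)) (𝓝[Set.Ioo 0 1] 1) (𝓝 0) :=
    tendsto_nhdsWithin_of_tendsto_nhds <| Continuous.tendsto' (by fun_prop) _ _ (by simp)
  filter_upwards [hlim.eventually_lt_const (mul_pos (sub_pos.2 hRR') (sub_pos.2 hc)),
    self_mem_nhdsWithin] with ξ hξ ⟨hξ0, hξ1⟩
  by_contra! hlt
  exact hξ.not_ge <| mul_sub_one_le_of_frequently_of_eventually hF hξ0.le hξ1 hc.le hRR'.le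
    hlong (eventually_sub_le_of_polyaLimsup_lt hξ1 hlt)

end Density

theorem stmt_8_general {Λ : ℕ → ℝ} (hΛ : Tendsto Λ atTop atTop) :
    Tendsto (polyaLimsup Λ) (𝓝[Set.Ioo (0 : ℝ) 1] 1) (𝓝 (bmDensity Λ (Set.Ioi 1))) := by
  have hF : Monotone (countFn Λ) := countFn_monotone hΛ
  refine tendsto_order.2 ⟨fun q hq => ?_, fun q hq => ?_⟩
  · obtain ⟨_, ⟨R, hR, rfl⟩, hqR⟩ := lt_sSup_iff.1 hq
    obtain ⟨R', hqR', hRR'⟩ := EReal.lt_iff_exists_real_btwn.1 hqR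
    exact (eventually_le_polyaLimsup_of_mem_RSet hF hR (EReal.coe_lt_coe_iff.1 hRR')).mono
      fun _ => hqR'.trans_le
  · filter_upwards [self_mem_nhdsWithin] with ξ ⟨hξ0, hξ1⟩
    exact (polyaLimsup_le_bmDensity hF hξ0 hξ1).trans_lt hq

theorem stmt_8 (Λ : ℕ → ℝ) (hmono : StrictMono Λ) (h0 : 0 ≤ Λ 0)
    (htend : Filter.Tendsto Λ Filter.atTop Filter.atTop) (p : EReal)
    (hp : Filter.Tendsto (fun ξ : ℝ => polyaLimsup Λ ξ)
      (nhdsWithin (1 : ℝ) (Set.Ioo (0 : ℝ) 1)) (nhds p)) :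
    p = bmDensity Λ (Set.Ioi (1 : EReal)) := by
  have := right_nhdsWithin_Ioo_neBot (zero_lt_one (α := ℝ))
  exact tendsto_nhds_unique hp (stmt_8_general htend)
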